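/- arXiv:2407.21175 — 2 statements merged into one kernel-verified Lean document; each statement's English description precedes it below -/
import Mathlib

section
/- There is a ring isomorphism from Z(n) to its opposite ring Z(n)^op sending each generator z_{i,j} (1 ≤ i < j ≤ n) to the corresponding element z_{i,j} of the opposite ring; in other words, the identity on generators extends to an involutory anti-automorphism of Z(n) reversing the order of multiplication. -/
/-- Index type for the generators `z_{i,j}`, `1 ≤ i < j ≤ n`. -/
abbrev ZIdx (n : ℕ) := {p : ℕ × ℕ // 1 ≤ p.1 ∧ p.1 < p.2 ∧ p.2 ≤ n}

/-- The element `z_{i,j}` of the free algebra, with the conventions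
`z_{a,b} = (-1)^(a-b) z_{b,a}` for `a > b` and `z_{a,a} = 1`. -/
noncomputable def zf (n : ℕ) (i j : ℕ) : FreeAlgebra ℤ (ZIdx n) :=
  if h : 1 ≤ i ∧ i < j ∧ j ≤ n then FreeAlgebra.ι ℤ ⟨(i, j), h⟩
  else if h : 1 ≤ j ∧ j < i ∧ i ≤ n then ((-1 : ℤ) ^ (i - j)) • FreeAlgebra.ι ℤ ⟨(j, i), h⟩
  else if i = j then 1 else 0

/-- The defining relations of the ring `Z(n)`. -/
inductive ZRel (n : ℕ) : FreeAlgebra ℤ (ZIdx n) → FreeAlgebra ℤ (ZIdx n) → Prop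
  | contain (i j i' j' : ℕ) (h1 : 1 ≤ i) (h2 : i < j) (h3 : j ≤ n)
      (h1' : 1 ≤ i') (h2' : i' < j') (h3' : j' ≤ n)
      (hsub : Set.Icc i' j' ⊆ Set.Icc i j) :
      ZRel n (zf n i j * zf n i' j')
        (((-1 : ℤ) ^ ((j - i) * (j' - i'))) • (zf n (i + j - i') (i + j - j') * zf n i j))
  | disj (i j i' j' : ℕ) (h1 : 1 ≤ i) (h2 : i < j) (h3 : j ≤ n)
      (h1' : 1 ≤ i') (h2' : i' < j') (h3' : j' ≤ n)
      (hd : Set.Icc i j ∩ Set.Icc i' j' = ∅) :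
      ZRel n (zf n i j * zf n i' j')
        (((-1 : ℤ) ^ ((j - i) * (j' - i'))) • (zf n i' j' * zf n i j))
  | overlap (i j i' j' : ℕ) (h1 : 1 ≤ i) (h2 : i < j) (h3 : j ≤ n)
      (h1' : 1 ≤ i') (h2' : i' < j') (h3' : j' ≤ n)
      (hne : (Set.Icc i j ∩ Set.Icc i' j').Nonempty)
      (hnc1 : ¬ Set.Icc i' j' ⊆ Set.Icc i j) (hnc2 : ¬ Set.Icc i j ⊆ Set.Icc i' j') :
      ZRel n (zf n i j * zf n i' j') 0

/-- The ring `Z(n)`. -/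
abbrev Zring (n : ℕ) := RingQuot (ZRel n)

/-- The image of the generator `z_{i,j}` in `Z(n)`. -/
noncomputable def zElem (n : ℕ) (i j : ℕ) : Zring n :=
  RingQuot.mkRingHom (ZRel n) (zf n i j)

/-!
Word reversal on the free algebra fixes the generators, hence every `z_{i,j}`, so only its
compatibility with the relations needs an argument. Reversal exchanges the two disjointness
relations of a pair of intervals, and likewise the two overlap relations. The reverse of the
containment relation for `[a,b] ⊆ [i,j]` is, up to sign, the containment relation for the mirror
image `[i+j-b, i+j-a]` of `[a,b]` in `[i,j]`; the signs cancel because reorienting `z_{a,b}` and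
reorienting its mirror image both cost `(-1)^(b-a)`.
-/

section RingQuotStar

variable {R : Type*} [Semiring R] [StarRing R] {r : R → R → Prop}
  (hr : ∀ ⦃x y⦄, r x y → RingQuot.mkRingHom r (star x) = RingQuot.mkRingHom r (star y))

/-- The anti-endomorphism of `RingQuot r` induced by `star`, as a homomorphism to the opposite
ring. -/
def ringQuotStarHom : RingQuot r →+* (RingQuot r)ᵐᵒᵖ :=
  RingQuot.lift ⟨(RingQuot.mkRingHom r).op.comp (starRingEquiv : R ≃+* Rᵐᵒᵖ),
    fun _ _ h => congrArg MulOpposite.op (hr h)⟩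

theorem ringQuotStarHom_mkRingHom (x : R) :
    ringQuotStarHom hr (RingQuot.mkRingHom r x) =
      MulOpposite.op (RingQuot.mkRingHom r (star x)) :=
  RingQuot.lift_mkRingHom_apply _ _ _

/-- The star ring structure that `RingQuot r` inherits from `R`. Unlike in `RingQuot.starRing`,
the starred relations need only hold in the quotient, rather than be instances of `r`. -/
abbrev ringQuotStarRing : StarRing (RingQuot r) where
  star x := (ringQuotStarHom hr x).unop
  star_involutive x := by
    obtain ⟨x, rfl⟩ := RingQuot.mkRingHom_surjective r x
    simp only [ringQuotStarHom_mkRingHom, MulOpposite.unop_op, star_star]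
  star_mul x y := by rw [map_mul, MulOpposite.unop_mul]
  star_add x y := by rw [map_add, MulOpposite.unop_add]

end RingQuotStar

theorem neg_one_pow_smul_neg_one_pow_smul {M : Type*} [AddCommGroup M] (k : ℕ) (x : M) :
    (-1 : ℤ) ^ k • (-1 : ℤ) ^ k • x = x := by
  rw [smul_smul, ← mul_pow, neg_one_mul, neg_neg, one_pow, one_smul]

section ZringStar

variable {n i j a b : ℕ}

theorem zf_swap (h : i ≤ j) : zf n j i = (-1 : ℤ) ^ (j - i) • zf n i j := by
  rcases h.eq_or_lt with rfl | h
  · rw [Nat.sub_self, pow_zero, one_smul]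
  · simp only [zf, h, h.not_gt, h.ne, h.ne', false_and, and_false, true_and, dite_false, ite_false]
    split_ifs <;> simp only [smul_zero]

theorem star_zf (n i j : ℕ) : star (zf n i j) = zf n i j := by
  unfold zf
  split_ifs <;> simp only [star_zsmul, FreeAlgebra.star_ι, star_one, star_zero]

theorem zElem_swap (h : i ≤ j) : zElem n j i = (-1 : ℤ) ^ (j - i) • zElem n i j := by
  rw [zElem, zf_swap h, map_zsmul, zElem]

theorem zElem_mul_zElem_of_contain (hi : 1 ≤ i) (hia : i ≤ a) (hab : a < b) (hbj : b ≤ j)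
    (hj : j ≤ n) :
    zElem n i j * zElem n a b =
      (-1 : ℤ) ^ ((j - i) * (b - a)) • (zElem n (i + j - a) (i + j - b) * zElem n i j) := by
  simpa only [zElem, map_mul, map_zsmul] using RingQuot.mkRingHom_rel
    (ZRel.contain (n := n) i j a b hi (by omega) hj (by omega) hab (by omega)
      (Set.Icc_subset_Icc hia hbj))

theorem zElem_mul_zElem_of_contain_swap (hi : 1 ≤ i) (hia : i ≤ a) (hab : a < b) (hbj : b ≤ j)
    (hj : j ≤ n) :
    zElem n i j * zElem n b a =
      (-1 : ℤ) ^ ((j - i) * (b - a)) • (zElem n (i + j - b) (i + j - a) * zElem n i j) := by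
  have reflected_length : i + j - a - (i + j - b) = b - a := by omega
  rw [zElem_swap hab.le, mul_smul_comm, zElem_mul_zElem_of_contain hi hia hab hbj hj,
    zElem_swap (show i + j - b ≤ i + j - a by omega), reflected_length, smul_mul_assoc, smul_comm,
    neg_one_pow_smul_neg_one_pow_smul]

theorem zElem_mul_zElem_of_contained (hi : 1 ≤ i) (hia : i ≤ a) (hab : a < b) (hbj : b ≤ j)
    (hj : j ≤ n) :
    zElem n a b * zElem n i j =
      (-1 : ℤ) ^ ((j - i) * (b - a)) • (zElem n i j * zElem n (i + j - a) (i + j - b)) := by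
  have reflected_length : i + j - a - (i + j - b) = b - a := by omega
  rw [zElem_mul_zElem_of_contain_swap hi (show i ≤ i + j - b by omega) (by omega) (by omega) hj,
    reflected_length, neg_one_pow_smul_neg_one_pow_smul, Nat.sub_sub_self (by omega),
    Nat.sub_sub_self (by omega)]

theorem zElem_mul_zElem_of_disjoint (hi : 1 ≤ i) (hij : i < j) (hj : j ≤ n) (ha : 1 ≤ a)
    (hab : a < b) (hb : b ≤ n) (hdisj : Set.Icc i j ∩ Set.Icc a b = ∅) :
    zElem n i j * zElem n a b =
      (-1 : ℤ) ^ ((j - i) * (b - a)) • (zElem n a b * zElem n i j) := by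
  simpa only [zElem, map_mul, map_zsmul] using
    RingQuot.mkRingHom_rel (ZRel.disj (n := n) i j a b hi hij hj ha hab hb hdisj)

theorem zElem_mul_zElem_of_overlap (hi : 1 ≤ i) (hij : i < j) (hj : j ≤ n) (ha : 1 ≤ a)
    (hab : a < b) (hb : b ≤ n) (hmeet : (Set.Icc i j ∩ Set.Icc a b).Nonempty)
    (hab_ij : ¬ Set.Icc a b ⊆ Set.Icc i j) (hij_ab : ¬ Set.Icc i j ⊆ Set.Icc a b) :
    zElem n i j * zElem n a b = 0 := by
  simpa only [zElem, map_mul, map_zero] using RingQuot.mkRingHom_rel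
    (ZRel.overlap (n := n) i j a b hi hij hj ha hab hb hmeet hab_ij hij_ab)

theorem mkRingHom_star_eq_of_zRel {x y : FreeAlgebra ℤ (ZIdx n)} (h : ZRel n x y) :
    RingQuot.mkRingHom (ZRel n) (star x) = RingQuot.mkRingHom (ZRel n) (star y) := by
  induction h with
  | contain i j a b hi _ hj _ hab _ hsub =>
    obtain ⟨hia, hbj⟩ := (Set.Icc_subset_Icc_iff hab.le).1 hsub
    simpa only [star_mul, star_zsmul, star_zf, zElem, map_mul, map_zsmul] using
      zElem_mul_zElem_of_contained hi hia hab hbj hj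
  | disj i j a b hi hij hj ha hab hb hdisj =>
    rw [Set.inter_comm] at hdisj
    simpa only [star_mul, star_zsmul, star_zf, zElem, map_mul, map_zsmul, mul_comm (b - a)] using
      zElem_mul_zElem_of_disjoint ha hab hb hi hij hj hdisj
  | overlap i j a b hi hij hj ha hab hb hmeet hab_ij hij_ab =>
    rw [Set.inter_comm] at hmeet
    simpa only [star_mul, star_zf, star_zero, zElem, map_mul, map_zero] using
      zElem_mul_zElem_of_overlap ha hab hb hi hij hj hmeet hij_ab hab_ij

/-- The anti-automorphism of `Z(n)` fixing the generators, as a `star` operation, so that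
involutivity is part of the structure. -/
noncomputable instance Zring.instStarRing : StarRing (Zring n) :=
  ringQuotStarRing fun _ _ => mkRingHom_star_eq_of_zRel

theorem star_mkRingHom (x : FreeAlgebra ℤ (ZIdx n)) :
    star (RingQuot.mkRingHom (ZRel n) x) = RingQuot.mkRingHom (ZRel n) (star x) :=
  congrArg MulOpposite.unop (ringQuotStarHom_mkRingHom _ x)

theorem star_zElem (n i j : ℕ) : star (zElem n i j) = zElem n i j := by
  rw [zElem, star_mkRingHom, star_zf]

end ZringStar

/-- There is a ring isomorphism from `Z(n)` to its opposite ring fixing all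
the generators `z_{i,j}`; i.e. the identity on generators extends to an involutory
anti-automorphism of `Z(n)`. -/
theorem Zring_iso_opposite (n : ℕ) (hn : 2 ≤ n) :
    ∃ e : Zring n ≃+* (Zring n)ᵐᵒᵖ,
      ∀ i j : ℕ, 1 ≤ i → i < j → j ≤ n →
        e (zElem n i j) = MulOpposite.op (zElem n i j) :=
  ⟨starRingEquiv, fun i j _ _ _ => congrArg MulOpposite.op (star_zElem n i j)⟩
end

section
/- Let n = 4 and write u = z_{1,2}, v = z_{2,3}, w = z_{3,4}, x = z_{1,3}, y = z_{2,4} in Z(4). Let I₁ be the two-sided ideal of Z(4) generated by uw, and let I₂ be the two-sided ideal generated by {v, x, y}. Then I₁ ∩ I₂ = {0}; equivalently, the natural ring homomorphism Z(4) → Z(4)/I₁ × Z(4)/I₂ is injective. -/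
/-!
Write `t = z_{1,4}`. The generators `u`, `w`, `t` of `Z(4)` satisfy `wu = -uw`, `tu = wt` and
`tw = ut`, while every product of `v`, `x` or `y` with a monomial `u^(a+1) w^(b+1) t^d`, on either
side, is zero. Hence these monomials span the ideal `I₁` generated by `uw` as an abelian group. On
the other hand `Z(4)` acts on the free abelian group with basis the formal monomials `u^a w^b t^d`
by left multiplication, with `v`, `x`, `y` acting by zero. An element of `I₂` therefore kills `1`,
whereas the spanning monomials of `I₁` send `1` to distinct basis vectors, so a combination of them
that lies in `I₂` is trivial.
-/

section SpanMul

variable {R A : Type*} [CommSemiring R] [Semiring A] [Algebra R A]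

theorem mul_mem_span_of_adjoin_eq_top_left {G M : Set A} (hG : Algebra.adjoin R G = ⊤)
    (hGM : ∀ g ∈ G, ∀ m ∈ M, g * m ∈ Submodule.span R M) (a : A) {b : A}
    (hb : b ∈ Submodule.span R M) : a * b ∈ Submodule.span R M := by
  have hgen : ∀ g ∈ G, Submodule.span R M ≤ (Submodule.span R M).comap (LinearMap.mulLeft R g) :=
    fun g hg => Submodule.span_le.2 (hGM g hg)
  have ha : a ∈ Algebra.adjoin R G := hG ▸ Algebra.mem_top
  induction ha using Algebra.adjoin_induction generalizing b with
  | mem g hg => exact hgen g hg hb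
  | algebraMap r => simpa only [← Algebra.smul_def] using Submodule.smul_mem _ r hb
  | add x y _ _ hx hy => simpa only [add_mul] using Submodule.add_mem _ (hx hb) (hy hb)
  | mul x y _ _ hx hy => simpa only [mul_assoc] using hx (hy hb)

theorem mul_mem_span_of_adjoin_eq_top_right {G M : Set A} (hG : Algebra.adjoin R G = ⊤)
    (hMG : ∀ g ∈ G, ∀ m ∈ M, m * g ∈ Submodule.span R M) (a : A) {b : A}
    (hb : b ∈ Submodule.span R M) : b * a ∈ Submodule.span R M := by
  have hgen : ∀ g ∈ G, Submodule.span R M ≤ (Submodule.span R M).comap (LinearMap.mulRight R g) :=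
    fun g hg => Submodule.span_le.2 (hMG g hg)
  have ha : a ∈ Algebra.adjoin R G := hG ▸ Algebra.mem_top
  induction ha using Algebra.adjoin_induction generalizing b with
  | mem g hg => exact hgen g hg hb
  | algebraMap r =>
    simpa only [← Algebra.commutes, ← Algebra.smul_def] using Submodule.smul_mem _ r hb
  | add x y _ _ hx hy => simpa only [mul_add] using Submodule.add_mem _ (hx hb) (hy hb)
  | mul x y _ _ hx hy => simpa only [mul_assoc] using hy (hx hb)

end SpanMul

theorem mem_span_of_mem_twoSidedIdeal_span {R A : Type*} [CommRing R] [Ring A] [Algebra R A]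
    {G M : Set A} (hG : Algebra.adjoin R G = ⊤)
    (hGM : ∀ g ∈ G, ∀ m ∈ M, g * m ∈ Submodule.span R M)
    (hMG : ∀ g ∈ G, ∀ m ∈ M, m * g ∈ Submodule.span R M) {a : A}
    (ha : a ∈ TwoSidedIdeal.span M) : a ∈ Submodule.span R M := by
  rw [TwoSidedIdeal.mem_span_iff_mem_addSubgroup_closure] at ha
  refine (AddSubgroup.closure_le (Submodule.span R M).toAddSubgroup).2 ?_ ha
  rintro _ ⟨_, ⟨b, -, m, hm, rfl⟩, c, -, rfl⟩
  exact mul_mem_span_of_adjoin_eq_top_right hG hMG c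
    (mul_mem_span_of_adjoin_eq_top_left hG hGM b (Submodule.subset_span hm))

theorem pow_mul_pow_of_mul_eq_neg_mul {A : Type*} [Ring A] {u w : A} (h : w * u = -(u * w))
    (a b : ℕ) : w ^ b * u ^ a = (-1 : ℤ) ^ (a * b) • (u ^ a * w ^ b) := by
  have hw : SemiconjBy w (u ^ a) ((-u) ^ a) :=
    SemiconjBy.pow_right (show w * u = -u * w by rw [h, neg_mul]) a
  have hu : SemiconjBy (u ^ a) ((-1 : ℤ) ^ a • w) w := by
    rw [SemiconjBy, hw.eq, neg_pow u a, mul_smul_comm, ← smul_mul_assoc, zsmul_eq_mul, Int.cast_pow,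
      Int.cast_neg, Int.cast_one]
  rw [← (hu.pow_right b).eq, smul_pow, mul_smul_comm, pow_mul]

namespace Zring

/-- A family `z i j` in a ring that satisfies the defining relations of `Z(n)`. Only the values
with `1 ≤ i < j ≤ n` matter: the reflected factor `z_{i+j-i', i+j-j'}` of relation (i), whose
indices are decreasing, is replaced by `(-1)^(j'-i') z_{i+j-j', i+j-i'}`. -/
structure IsZSystem (n : ℕ) {A : Type*} [Ring A] (z : ℕ → ℕ → A) : Prop where
  mul_of_nested {i j i' j' : ℕ} (hi : 1 ≤ i := by omega) (hii' : i ≤ i' := by omega)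
    (hij' : i' < j' := by omega) (hjj' : j' ≤ j := by omega) (hj : j ≤ n := by omega) :
    z i j * z i' j' = (-1 : ℤ) ^ ((j - i + 1) * (j' - i')) • (z (i + j - j') (i + j - i') * z i j)
  mul_of_disjoint {i j i' j' : ℕ} (hi : 1 ≤ i := by omega) (hij : i < j := by omega)
    (hj : j ≤ n := by omega) (hi' : 1 ≤ i' := by omega) (hij' : i' < j' := by omega)
    (hj' : j' ≤ n := by omega) (hdisj : j < i' ∨ j' < i := by omega) :
    z i j * z i' j' = (-1 : ℤ) ^ ((j - i) * (j' - i')) • (z i' j' * z i j)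
  mul_of_crossing {i j i' j' : ℕ} (hi : 1 ≤ i := by omega) (hij : i < j := by omega)
    (hj : j ≤ n := by omega) (hi' : 1 ≤ i' := by omega) (hij' : i' < j' := by omega)
    (hj' : j' ≤ n := by omega)
    (hcross : (i < i' ∧ i' ≤ j ∧ j < j') ∨ (i' < i ∧ i ≤ j' ∧ j' < j) := by omega) :
    z i j * z i' j' = 0

/-- The entries of a family `z i j` that stand for the generators of `Z(n)`. -/
def generators (n : ℕ) {A : Type*} (z : ℕ → ℕ → A) : Set A :=
  {a | ∃ i j, 1 ≤ i ∧ i < j ∧ j ≤ n ∧ z i j = a}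

theorem generators_four {A : Type*} (z : ℕ → ℕ → A) :
    generators 4 z = {z 1 2, z 2 3, z 3 4, z 1 3, z 2 4, z 1 4} := by
  ext a
  constructor
  · rintro ⟨i, j, hi, hij, hj, rfl⟩
    have hi' : i ≤ 3 := by omega
    interval_cases i <;> interval_cases j <;> simp
  · rintro (rfl | rfl | rfl | rfl | rfl | rfl) <;>
      exact ⟨_, _, by decide, by decide, by decide, rfl⟩

section Presentation

variable {n : ℕ} {A : Type*} [Ring A]

theorem zf_of_lt {i j : ℕ} (h : 1 ≤ i ∧ i < j ∧ j ≤ n) :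
    zf n i j = FreeAlgebra.ι ℤ ⟨(i, j), h⟩ :=
  dif_pos h

theorem zf_of_gt {i j : ℕ} (hj : 1 ≤ j) (hji : j < i) (hi : i ≤ n) :
    zf n i j = (-1 : ℤ) ^ (i - j) • zf n j i := by
  rw [zf, dif_neg (by omega), dif_pos ⟨hj, hji, hi⟩, zf_of_lt ⟨hj, hji, hi⟩]

theorem smul_zf_reflect_mul {i j i' j' : ℕ} (hi : 1 ≤ i) (hii' : i ≤ i') (hij' : i' < j')
    (hjj' : j' ≤ j) (hj : j ≤ n) :
    (-1 : ℤ) ^ ((j - i) * (j' - i')) • (zf n (i + j - i') (i + j - j') * zf n i j) =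
      (-1 : ℤ) ^ ((j - i + 1) * (j' - i')) •
        (zf n (i + j - j') (i + j - i') * zf n i j) := by
  rw [zf_of_gt (by omega) (by omega) (by omega), smul_mul_assoc, smul_smul, ← pow_add,
    show i + j - i' - (i + j - j') = j' - i' by omega, ← Nat.succ_mul]

theorem isZSystem_zElem (n : ℕ) : IsZSystem n (zElem n) where
  mul_of_nested {i j i' j'} hi hii' hij' hjj' hj := by
    have h := RingQuot.mkRingHom_rel (ZRel.contain (n := n) i j i' j' hi (by omega) hj (by omega)
      hij' (by omega) (Set.Icc_subset_Icc hii' hjj'))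
    rw [smul_zf_reflect_mul hi hii' hij' hjj' hj] at h
    simpa only [zElem, map_mul, map_zsmul] using h
  mul_of_disjoint {i j i' j'} hi hij hj hi' hij' hj' hd := by
    have h := RingQuot.mkRingHom_rel (ZRel.disj (n := n) i j i' j' hi hij hj hi' hij' hj'
      (by rw [Set.Icc_inter_Icc, Set.Icc_eq_empty_iff, sup_le_iff, le_inf_iff, le_inf_iff]; omega))
    simpa only [zElem, map_mul, map_zsmul] using h
  mul_of_crossing {i j i' j'} hi hij hj hi' hij' hj' hc := by
    have h := RingQuot.mkRingHom_rel (ZRel.overlap (n := n) i j i' j' hi hij hj hi' hij' hj'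
      (by rw [Set.Icc_inter_Icc, Set.nonempty_Icc, sup_le_iff, le_inf_iff, le_inf_iff]; omega)
      (by rw [Set.Icc_subset_Icc_iff hij'.le]; omega)
      (by rw [Set.Icc_subset_Icc_iff hij.le]; omega))
    simpa only [zElem, map_mul, map_zero] using h

theorem adjoin_generators_zElem (n : ℕ) : Algebra.adjoin ℤ (generators n (zElem n)) = ⊤ := by
  refine eq_top_iff.2 fun a _ => ?_
  obtain ⟨a, rfl⟩ := RingQuot.mkRingHom_surjective (ZRel n) a
  induction a using FreeAlgebra.induction with
  | grade0 k => simp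
  | grade1 p =>
    obtain ⟨⟨i, j⟩, hi, hij, hj⟩ := p
    refine Algebra.subset_adjoin ⟨i, j, hi, hij, hj, ?_⟩
    rw [zElem, zf_of_lt]
  | mul a b ha hb => simpa only [map_mul] using mul_mem (ha trivial) (hb trivial)
  | add a b ha hb => simpa only [map_add] using add_mem (ha trivial) (hb trivial)

/-- The homomorphism from the free algebra sending each generator `z_{i,j}` to `z i j`. -/
noncomputable def freeLift (n : ℕ) (z : ℕ → ℕ → A) : FreeAlgebra ℤ (ZIdx n) →+* A :=
  (FreeAlgebra.lift ℤ fun p : ZIdx n => z p.1.1 p.1.2).toRingHom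

theorem freeLift_zf (z : ℕ → ℕ → A) {i j : ℕ} (hi : 1 ≤ i) (hij : i < j) (hj : j ≤ n) :
    freeLift n z (zf n i j) = z i j := by
  rw [zf_of_lt ⟨hi, hij, hj⟩]
  exact FreeAlgebra.lift_ι_apply _ _

theorem IsZSystem.freeLift_eq_of_zRel {z : ℕ → ℕ → A} (hz : IsZSystem n z)
    ⦃p q : FreeAlgebra ℤ (ZIdx n)⦄ (h : ZRel n p q) : freeLift n z p = freeLift n z q := by
  cases h with
  | contain i j i' j' hi hij hj hi' hij' hj' hsub =>
    obtain ⟨hii', hjj'⟩ := (Set.Icc_subset_Icc_iff hij'.le).1 hsub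
    rw [smul_zf_reflect_mul hi hii' hij' hjj' hj]
    simp only [map_mul, map_zsmul]
    rw [freeLift_zf z hi hij hj, freeLift_zf z hi' hij' hj',
      freeLift_zf z (by omega) (by omega) (by omega), hz.mul_of_nested hi hii' hij' hjj' hj]
  | disj i j i' j' hi hij hj hi' hij' hj' hd =>
    rw [Set.Icc_inter_Icc, Set.Icc_eq_empty_iff, sup_le_iff, le_inf_iff, le_inf_iff] at hd
    simp only [map_mul, map_zsmul]
    rw [freeLift_zf z hi hij hj, freeLift_zf z hi' hij' hj',
      hz.mul_of_disjoint hi hij hj hi' hij' hj' (by omega)]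
  | overlap i j i' j' hi hij hj hi' hij' hj' hne hsub hsub' =>
    rw [Set.Icc_inter_Icc, Set.nonempty_Icc, sup_le_iff, le_inf_iff, le_inf_iff] at hne
    rw [Set.Icc_subset_Icc_iff hij'.le] at hsub
    rw [Set.Icc_subset_Icc_iff hij.le] at hsub'
    rw [map_mul, map_zero, freeLift_zf z hi hij hj, freeLift_zf z hi' hij' hj',
      hz.mul_of_crossing hi hij hj hi' hij' hj' (by omega)]

/-- The homomorphism out of `Z(n)` given by a family that satisfies the defining relations. -/
noncomputable def lift {z : ℕ → ℕ → A} (hz : IsZSystem n z) : Zring n →+* A :=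
  RingQuot.lift ⟨freeLift n z, hz.freeLift_eq_of_zRel⟩

theorem lift_zElem {z : ℕ → ℕ → A} (hz : IsZSystem n z) {i j : ℕ} (hi : 1 ≤ i) (hij : i < j)
    (hj : j ≤ n) : lift hz (zElem n i j) = z i j := by
  rw [lift, zElem, RingQuot.lift_mkRingHom_apply, freeLift_zf z hi hij hj]

end Presentation

section IdealOfUW

variable {A : Type*} [Ring A] {z : ℕ → ℕ → A}

theorem IsZSystem.semiconjBy_top {n : ℕ} (hz : IsZSystem n z) (hn : Even n) {i j : ℕ} (hi : 1 ≤ i)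
    (hij : i < j) (hj : j ≤ n) : SemiconjBy (z 1 n) (z i j) (z (n + 1 - j) (n + 1 - i)) := by
  have hsign : (-1 : ℤ) ^ ((n - 1 + 1) * (j - i)) = 1 := by
    rw [Nat.sub_add_cancel (by omega)]
    exact (hn.mul_right _).neg_one_pow
  have h := hz.mul_of_nested le_rfl hi hij hj le_rfl
  rwa [hsign, one_smul, add_comm 1 n] at h

theorem IsZSystem.exists_semiconjBy_top_pow {n : ℕ} (hz : IsZSystem n z) (hn : Even n) (d : ℕ) :
    ∀ g ∈ generators n z, ∃ g' ∈ generators n z, SemiconjBy (z 1 n ^ d) g g' := by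
  induction d with
  | zero => exact fun g hg => ⟨g, hg, by simp⟩
  | succ d ih =>
    intro g hg
    obtain ⟨_, ⟨i, j, hi, hij, hj, rfl⟩, h⟩ := ih g hg
    refine ⟨z (n + 1 - j) (n + 1 - i), ⟨_, _, by omega, by omega, by omega, rfl⟩, ?_⟩
    rw [pow_succ']
    exact (hz.semiconjBy_top hn hi hij hj).mul_left h

/-- The monomial `u^(a+1) w^(b+1) t^d`, where `u = z_{1,2}`, `w = z_{3,4}` and `t = z_{1,4}`. These
monomials are a `ℤ`-basis of the ideal of `Z(4)` generated by `uw`. -/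
def monomial (z : ℕ → ℕ → A) (p : ℕ × ℕ × ℕ) : A :=
  z 1 2 ^ (p.1 + 1) * z 3 4 ^ (p.2.1 + 1) * z 1 4 ^ p.2.2

/-- The additive group spanned by the monomials `u^(a+1) w^(b+1) t^d`. -/
def monomialSpan (z : ℕ → ℕ → A) : Submodule ℤ A :=
  Submodule.span ℤ (Set.range (monomial z))

theorem monomial_mem_monomialSpan (z : ℕ → ℕ → A) (p : ℕ × ℕ × ℕ) :
    monomial z p ∈ monomialSpan z :=
  Submodule.subset_span ⟨p, rfl⟩

theorem mul_pow_mem_monomialSpan {s : A} (hs : s ∈ monomialSpan z) (d : ℕ) :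
    s * z 1 4 ^ d ∈ monomialSpan z := by
  have hle : monomialSpan z ≤ (monomialSpan z).comap (LinearMap.mulRight ℤ (z 1 4 ^ d)) := by
    refine Submodule.span_le.2 ?_
    rintro _ ⟨⟨a, b, c⟩, rfl⟩
    have h : monomial z (a, b, c) * z 1 4 ^ d = monomial z (a, b, c + d) := by
      simp only [monomial, pow_add, mul_assoc]
    simpa [h] using monomial_mem_monomialSpan z (a, b, c + d)
  exact hle hs

local notation "u" => z 1 2
local notation "v" => z 2 3
local notation "w" => z 3 4
local notation "x" => z 1 3
local notation "y" => z 2 4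
local notation "t" => z 1 4

theorem u_mul_monomial (a b d : ℕ) : u * monomial z (a, b, d) = monomial z (a + 1, b, d) := by
  simp only [monomial, pow_succ' u (a + 1), mul_assoc]

namespace IsZSystem

variable (hz : IsZSystem 4 z)
include hz

theorem w_mul_u : w * u = -(u * w) := by
  simpa using hz.mul_of_disjoint (i := 3) (j := 4) (i' := 1) (j' := 2)

theorem w_pow_mul_u_pow (a b : ℕ) : w ^ b * u ^ a = (-1 : ℤ) ^ (a * b) • (u ^ a * w ^ b) :=
  pow_mul_pow_of_mul_eq_neg_mul hz.w_mul_u a b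

theorem semiconjBy_x_u : SemiconjBy x u (-v) := by
  simpa [SemiconjBy, pow_succ] using hz.mul_of_nested (i := 1) (j := 3) (i' := 1) (j' := 2)

theorem semiconjBy_y_neg_v : SemiconjBy y (-v) w := by
  simpa [SemiconjBy, pow_succ] using
    congrArg (-·) (hz.mul_of_nested (i := 2) (j := 4) (i' := 2) (j' := 3))

theorem x_mul_u_pow_mul_w (a : ℕ) : x * u ^ a * w = 0 := by
  have hxw : x * w = 0 := hz.mul_of_crossing
  rw [(hz.semiconjBy_x_u.pow_right a).eq, mul_assoc, hxw, mul_zero]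

theorem u_mul_w_pow_mul_y (b : ℕ) : u * w ^ b * y = 0 := by
  have huy : u * y = 0 := hz.mul_of_crossing
  rw [mul_assoc, ← (hz.semiconjBy_y_neg_v.pow_right b).eq, ← mul_assoc, huy, zero_mul]

theorem v_mul_monomial (p : ℕ × ℕ × ℕ) : v * monomial z p = 0 := by
  have hvu : v * u = 0 := hz.mul_of_crossing
  simp only [monomial, pow_succ' u, ← mul_assoc, hvu, zero_mul]

theorem x_mul_monomial (p : ℕ × ℕ × ℕ) : x * monomial z p = 0 := by
  simp only [monomial, pow_succ' w, ← mul_assoc, hz.x_mul_u_pow_mul_w, zero_mul]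

theorem y_mul_monomial (p : ℕ × ℕ × ℕ) : y * monomial z p = 0 := by
  have hyu : y * u = 0 := hz.mul_of_crossing
  simp only [monomial, pow_succ' u, ← mul_assoc, hyu, zero_mul]

theorem w_mul_monomial (a b d : ℕ) :
    w * monomial z (a, b, d) = (-1 : ℤ) ^ (a + 1) • monomial z (a, b + 1, d) := by
  have hwu := hz.w_pow_mul_u_pow (a + 1) 1
  rw [pow_one, mul_one] at hwu
  simp only [monomial, pow_succ' w (b + 1), ← mul_assoc, hwu, smul_mul_assoc]

theorem t_mul_monomial (a b d : ℕ) :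
    t * monomial z (a, b, d) = (-1 : ℤ) ^ ((b + 1) * (a + 1)) • monomial z (b, a, d + 1) := by
  have htu : SemiconjBy t u w := hz.semiconjBy_top (by decide) (by omega) (by omega) (by omega)
  have htw : SemiconjBy t w u := hz.semiconjBy_top (by decide) (by omega) (by omega) (by omega)
  calc t * monomial z (a, b, d)
      = t * (u ^ (a + 1) * w ^ (b + 1)) * t ^ d := by simp only [monomial, mul_assoc]
    _ = w ^ (a + 1) * u ^ (b + 1) * t ^ (d + 1) := by
      rw [((htu.pow_right _).mul_right (htw.pow_right _)).eq, mul_assoc, pow_succ' t d]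
    _ = (-1 : ℤ) ^ ((b + 1) * (a + 1)) • monomial z (b, a, d + 1) := by
      rw [hz.w_pow_mul_u_pow, smul_mul_assoc, monomial]

theorem generator_mul_monomial_mem :
    ∀ g ∈ generators 4 z, ∀ m ∈ Set.range (monomial z), g * m ∈ monomialSpan z := by
  rw [generators_four]
  rintro _ (rfl | rfl | rfl | rfl | rfl | rfl) _ ⟨⟨a, b, d⟩, rfl⟩
  · exact u_mul_monomial (z := z) a b d ▸ monomial_mem_monomialSpan z _
  · exact hz.v_mul_monomial _ ▸ zero_mem _
  · exact hz.w_mul_monomial a b d ▸ Submodule.smul_mem _ _ (monomial_mem_monomialSpan z _)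
  · exact hz.x_mul_monomial _ ▸ zero_mem _
  · exact hz.y_mul_monomial _ ▸ zero_mem _
  · exact hz.t_mul_monomial a b d ▸ Submodule.smul_mem _ _ (monomial_mem_monomialSpan z _)

theorem u_pow_mul_w_pow_mul_generator_mem (a b : ℕ) :
    ∀ g ∈ generators 4 z, u ^ (a + 1) * w ^ (b + 1) * g ∈ monomialSpan z := by
  have hwv : w * v = 0 := hz.mul_of_crossing
  have hwx : w * x = 0 := hz.mul_of_crossing
  have hwu : w ^ (b + 1) * u = (-1 : ℤ) ^ (b + 1) • (u * w ^ (b + 1)) := by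
    simpa only [pow_one, one_mul] using hz.w_pow_mul_u_pow 1 (b + 1)
  rw [generators_four]
  rintro _ (rfl | rfl | rfl | rfl | rfl | rfl)
  · have h : u ^ (a + 1) * w ^ (b + 1) * u = (-1 : ℤ) ^ (b + 1) • monomial z (a + 1, b, 0) := by
      simp only [monomial, mul_assoc, hwu, mul_smul_comm, pow_succ u (a + 1), pow_zero, mul_one]
    exact h ▸ Submodule.smul_mem _ _ (monomial_mem_monomialSpan z _)
  · simp only [pow_succ w, mul_assoc, hwv, mul_zero, zero_mem]
  · have h : u ^ (a + 1) * w ^ (b + 1) * w = monomial z (a, b + 1, 0) := by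
      simp only [monomial, mul_assoc, pow_succ w (b + 1), pow_zero, mul_one]
    exact h ▸ monomial_mem_monomialSpan z _
  · simp only [pow_succ w, mul_assoc, hwx, mul_zero, zero_mem]
  · have h : u ^ (a + 1) * w ^ (b + 1) * y = u ^ a * (u * w ^ (b + 1) * y) := by
      simp only [pow_succ u, mul_assoc]
    rw [h, hz.u_mul_w_pow_mul_y, mul_zero]
    exact zero_mem _
  · have h : u ^ (a + 1) * w ^ (b + 1) * t = monomial z (a, b, 1) := by rw [monomial, pow_one]
    exact h ▸ monomial_mem_monomialSpan z _

theorem monomial_mul_generator_mem :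
    ∀ g ∈ generators 4 z, ∀ m ∈ Set.range (monomial z), m * g ∈ monomialSpan z := by
  rintro g hg _ ⟨⟨a, b, d⟩, rfl⟩
  obtain ⟨g', hg', h⟩ := hz.exists_semiconjBy_top_pow (by decide) d g hg
  rw [monomial, mul_assoc, h.eq, ← mul_assoc]
  exact mul_pow_mem_monomialSpan (hz.u_pow_mul_w_pow_mul_generator_mem a b g' hg') d

theorem mem_monomialSpan_of_mem_span (hgen : Algebra.adjoin ℤ (generators 4 z) = ⊤) {a : A}
    (ha : a ∈ TwoSidedIdeal.span {u * w}) : a ∈ monomialSpan z := by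
  refine mem_span_of_mem_twoSidedIdeal_span hgen hz.generator_mul_monomial_mem
    hz.monomial_mul_generator_mem (TwoSidedIdeal.span_mono ?_ ha)
  exact Set.singleton_subset_iff.2 ⟨(0, 0, 0), by simp [monomial]⟩

end IsZSystem

end IdealOfUW

section Representation

/-- The free abelian group on triples `(a, b, d)`, standing for the monomials `u^a w^b t^d` of the
quotient of `Z(4)` by the ideal generated by `v`, `x`, `y`. -/
abbrev MonomialModule := ℕ × ℕ × ℕ →₀ ℤ

/-- Left multiplication by `u` on the monomials `u^a w^b t^d`. -/
noncomputable def opU : Module.End ℤ MonomialModule :=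
  Finsupp.linearCombination ℤ fun (a, b, d) => Finsupp.single (a + 1, b, d) 1

/-- Left multiplication by `w` on the monomials `u^a w^b t^d`, where `w u^a = (-1)^a u^a w`. -/
noncomputable def opW : Module.End ℤ MonomialModule :=
  Finsupp.linearCombination ℤ fun (a, b, d) => Finsupp.single (a, b + 1, d) ((-1) ^ a)

/-- Left multiplication by `t` on the monomials `u^a w^b t^d`, where
`t u^a w^b = w^a u^b t = (-1)^(ab) u^b w^a t`. -/
noncomputable def opT : Module.End ℤ MonomialModule :=
  Finsupp.linearCombination ℤ fun (a, b, d) => Finsupp.single (b, a, d + 1) ((-1) ^ (a * b))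

theorem opU_single (a b d : ℕ) (c : ℤ) :
    opU (Finsupp.single (a, b, d) c) = Finsupp.single (a + 1, b, d) c := by
  simp [opU]

theorem opW_single (a b d : ℕ) (c : ℤ) :
    opW (Finsupp.single (a, b, d) c) = Finsupp.single (a, b + 1, d) (c * (-1) ^ a) := by
  simp [opW]

theorem opT_single (a b d : ℕ) (c : ℤ) :
    opT (Finsupp.single (a, b, d) c) = Finsupp.single (b, a, d + 1) (c * (-1) ^ (a * b)) := by
  simp [opT]

theorem opW_mul_opU : opW * opU = -(opU * opW) := by
  refine Finsupp.lhom_ext fun ⟨a, b, d⟩ c => ?_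
  simp only [Module.End.mul_apply, LinearMap.neg_apply, opU_single, opW_single, pow_succ, mul_neg,
    mul_one, Finsupp.single_neg]

theorem opT_mul_opU : opT * opU = opW * opT := by
  refine Finsupp.lhom_ext fun ⟨a, b, d⟩ c => ?_
  simp only [Module.End.mul_apply, opU_single, opW_single, opT_single]
  congr 1
  ring

theorem opT_mul_opW : opT * opW = opU * opT := by
  refine Finsupp.lhom_ext fun ⟨a, b, d⟩ c => ?_
  have hsign : (-1 : ℤ) ^ a * (-1) ^ (a * (b + 1)) = (-1) ^ (a * b) := by
    rw [mul_add_one, pow_add, mul_left_comm, ← mul_pow]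
    norm_num
  simp only [Module.End.mul_apply, opU_single, opW_single, opT_single, mul_assoc, hsign]

/-- The operators by which the generators `z_{i,j}` of `Z(4)` act on `MonomialModule`; `v`, `x` and
`y` act by zero. -/
noncomputable def opFamily : ℕ → ℕ → Module.End ℤ MonomialModule
  | 1, 2 => opU
  | 3, 4 => opW
  | 1, 4 => opT
  | _, _ => 0

theorem isZSystem_opFamily : IsZSystem 4 opFamily where
  mul_of_nested {i j i' j'} hi hii' hij' hjj' hj := by
    have : i ≤ 3 := by omega
    have : i' ≤ 3 := by omega
    interval_cases i <;> interval_cases j <;> interval_cases i' <;> try omega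
    all_goals interval_cases j' <;> simp [opFamily, opT_mul_opU, opT_mul_opW]
  mul_of_disjoint {i j i' j'} hi hij hj hi' hij' hj' hdisj := by
    obtain ⟨rfl, rfl, rfl, rfl⟩ | ⟨rfl, rfl, rfl, rfl⟩ :
        (i = 1 ∧ j = 2 ∧ i' = 3 ∧ j' = 4) ∨ (i = 3 ∧ j = 4 ∧ i' = 1 ∧ j' = 2) := by omega
    all_goals simp [opFamily, opW_mul_opU]
  mul_of_crossing {i j i' j'} hi hij hj hi' hij' hj' hcross := by
    have : i ≤ 3 := by omega
    have : i' ≤ 3 := by omega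
    interval_cases i <;> interval_cases j <;> interval_cases i' <;> try omega
    all_goals interval_cases j' <;> first | omega | simp [opFamily]

theorem opU_pow_single (a b d k : ℕ) (c : ℤ) :
    (opU ^ k) (Finsupp.single (a, b, d) c) = Finsupp.single (a + k, b, d) c := by
  induction k with
  | zero => rfl
  | succ k ih => rw [pow_succ', Module.End.mul_apply, ih, opU_single, add_assoc]

theorem opW_pow_single_zero (b d k : ℕ) (c : ℤ) :
    (opW ^ k) (Finsupp.single (0, b, d) c) = Finsupp.single (0, b + k, d) c := by
  induction k with
  | zero => rfl
  | succ k ih => rw [pow_succ', Module.End.mul_apply, ih, opW_single, pow_zero, mul_one, add_assoc]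

theorem opT_pow_single_zero (d k : ℕ) (c : ℤ) :
    (opT ^ k) (Finsupp.single (0, 0, d) c) = Finsupp.single (0, 0, d + k) c := by
  induction k with
  | zero => rfl
  | succ k ih =>
    rw [pow_succ', Module.End.mul_apply, ih, opT_single, mul_zero, pow_zero, mul_one, add_assoc]

theorem monomial_opFamily_single_zero (a b d : ℕ) :
    monomial opFamily (a, b, d) (Finsupp.single (0, 0, 0) 1) =
      Finsupp.single (a + 1, b + 1, d) 1 := by
  simp only [monomial, opFamily, Module.End.mul_apply, opT_pow_single_zero, opW_pow_single_zero,
    opU_pow_single, zero_add]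

/-- The action of `Z(4)` on `MonomialModule`. -/
noncomputable def rep : Zring 4 →+* Module.End ℤ MonomialModule :=
  lift isZSystem_opFamily

theorem rep_zElem {i j : ℕ} (hi : 1 ≤ i := by omega) (hij : i < j := by omega)
    (hj : j ≤ 4 := by omega) : rep (zElem 4 i j) = opFamily i j :=
  lift_zElem isZSystem_opFamily hi hij hj

theorem rep_eq_zero_of_mem_span {a : Zring 4}
    (ha : a ∈ TwoSidedIdeal.span {zElem 4 2 3, zElem 4 1 3, zElem 4 2 4}) : rep a = 0 := by
  have hle : TwoSidedIdeal.span {zElem 4 2 3, zElem 4 1 3, zElem 4 2 4} ≤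
      TwoSidedIdeal.ker rep := by
    rw [TwoSidedIdeal.span_le]
    rintro _ (rfl | rfl | rfl) <;> exact (TwoSidedIdeal.mem_ker rep).2 rep_zElem
  exact (TwoSidedIdeal.mem_ker rep).1 (hle ha)

/-- The action of an element of `Z(4)` on the triple `(0, 0, 0)`, which stands for `1`. -/
noncomputable def repOne : Zring 4 →ₗ[ℤ] MonomialModule :=
  LinearMap.applyₗ (Finsupp.single (0, 0, 0) 1) ∘ₗ rep.toAddMonoidHom.toIntLinearMap

theorem repOne_apply (a : Zring 4) : repOne a = rep a (Finsupp.single (0, 0, 0) 1) :=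
  rfl

theorem repOne_monomial (a b d : ℕ) :
    repOne (monomial (zElem 4) (a, b, d)) = Finsupp.single (a + 1, b + 1, d) 1 := by
  rw [← monomial_opFamily_single_zero, repOne_apply]
  simp only [monomial, map_mul, map_pow]
  rw [rep_zElem, rep_zElem, rep_zElem]

theorem linearIndependent_repOne_monomial :
    LinearIndependent ℤ (repOne ∘ monomial (zElem 4)) := by
  have hinj : Function.Injective fun (a, b, d) => ((a + 1, b + 1, d) : ℕ × ℕ × ℕ) := by
    rintro ⟨a, b, d⟩ ⟨a', b', d'⟩ h
    simpa using h
  have heq : repOne ∘ monomial (zElem 4) =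
      Finsupp.basisSingleOne ∘ fun (a, b, d) => ((a + 1, b + 1, d) : ℕ × ℕ × ℕ) :=
    funext fun ⟨a, b, d⟩ => by simp [repOne_monomial]
  rw [heq]
  exact (Finsupp.basisSingleOne (R := ℤ)).linearIndependent.comp _ hinj

theorem disjoint_monomialSpan_ker_repOne :
    Disjoint (monomialSpan (zElem 4)) (LinearMap.ker repOne) :=
  Submodule.range_ker_disjoint linearIndependent_repOne_monomial

end Representation

end Zring

/-- In `Z(4)`, with `u = z_{1,2}`, `v = z_{2,3}`, `w = z_{3,4}`,
`x = z_{1,3}`, `y = z_{2,4}`, the two-sided ideal `I₁` generated by `u*w` and the two-sided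
ideal `I₂` generated by `{v, x, y}` intersect in `{0}`. -/
theorem Zring_four_minimal_primes_intersection :
    ∀ a : Zring 4,
      a ∈ TwoSidedIdeal.span {zElem 4 1 2 * zElem 4 3 4} →
      a ∈ TwoSidedIdeal.span {zElem 4 2 3, zElem 4 1 3, zElem 4 2 4} →
      a = 0 := by
  intro a huw hvxy
  have hmonomial : a ∈ Zring.monomialSpan (zElem 4) :=
    (Zring.isZSystem_zElem 4).mem_monomialSpan_of_mem_span (Zring.adjoin_generators_zElem 4) huw
  have hker : a ∈ LinearMap.ker Zring.repOne := by
    rw [LinearMap.mem_ker, Zring.repOne_apply, Zring.rep_eq_zero_of_mem_span hvxy,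
      LinearMap.zero_apply]
  exact Submodule.disjoint_def.1 Zring.disjoint_monomialSpan_ker_repOne a hmonomial hker
end
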